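/- Run the Oblivious k-Shot schedule (3 ≤ k ≤ √n) under the k-shot semantics on any n-vertex radio network. Let F be the set of active vertices at the beginning of some stage. If |F| ≤ k/2, then during the next 2·|F| stages the progress increases by at least |F|; that is, the average progress per stage over these stages is at least 1/2. -/

import Mathlib

/-- Vertex `v`, first informed at step `T`, transmits at step `t` under the
`k`-shot semantics with schedule `𝒯`: we need `t > T`, `v ∈ 𝒯 t`, and `t` must be
among the first `k` steps after `T` at which `v` appears in a transmission set,
i.e. fewer than `k` steps `t'` with `T < t' < t` satisfy `v ∈ 𝒯 t'`. -/
def transmitsAt {n : ℕ} (𝒯 : ℕ → Finset (Fin n)) (k : ℕ)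
    (T t : ℕ) (v : Fin n) : Prop :=
  T < t ∧ v ∈ 𝒯 t ∧ ((Finset.Ioo T t).filter (fun t' => v ∈ 𝒯 t')).card < k

open Classical in
/-- `runState 𝒯 k adj s t v = some T` iff vertex `v` has been informed by the end of
step `t`, and was first informed at step `T`.  The source `s` is informed at step `0`;
an uninformed vertex `w` becomes informed at step `t+1` iff exactly one in-neighbor
of `w` transmits at step `t+1`. -/
noncomputable def runState {n : ℕ} (𝒯 : ℕ → Finset (Fin n)) (k : ℕ)
    (adj : Fin n → Fin n → Prop) (s : Fin n) : ℕ → Fin n → Option ℕ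
  | 0 => fun v => if v = s then some 0 else none
  | t + 1 => fun w =>
      match runState 𝒯 k adj s t w with
      | some T => some T
      | none =>
          if ∃! v : Fin n, adj v w ∧
              ∃ T, runState 𝒯 k adj s t v = some T ∧ transmitsAt 𝒯 k T (t + 1) v
          then some (t + 1) else none

/-- `adj` together with source `s` forms an `n`-vertex radio network:
every vertex is reachable from the source by a directed path. -/
def IsNetwork {n : ℕ} (adj : Fin n → Fin n → Prop) (s : Fin n) : Prop :=
  ∀ v : Fin n, Relation.ReflTransGen adj s v

/-- The schedule `𝒯` completes broadcasting on the network `(adj, s)`. -/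
def Completes {n : ℕ} (𝒯 : ℕ → Finset (Fin n)) (k : ℕ)
    (adj : Fin n → Fin n → Prop) (s : Fin n) : Prop :=
  ∀ v : Fin n, ∃ t : ℕ, (runState 𝒯 k adj s t v).isSome

/-- `𝒯` is a correct `k`-shot broadcasting schedule for `n`: it completes
broadcasting on every `n`-vertex radio network. -/
def CorrectSchedule (n k : ℕ) (𝒯 : ℕ → Finset (Fin n)) : Prop :=
  ∀ (adj : Fin n → Fin n → Prop) (s : Fin n), IsNetwork adj s → Completes 𝒯 k adj s
/-- The ceiling of the square root of a natural number: the least `m` with `n ≤ m²`. -/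
def ceilSqrt (n : ℕ) : ℕ :=
  if Nat.sqrt n * Nat.sqrt n = n then Nat.sqrt n else Nat.sqrt n + 1

/-- The smallest prime `p` with `p ≥ m`. -/
def smallestPrimeGE (m : ℕ) : ℕ := Nat.find (Nat.exists_infinite_primes m)

/-- `p` for the Oblivious k-Shot schedule: the smallest prime `≥ ⌈√n⌉`. -/
def obP (n : ℕ) : ℕ := smallestPrimeGE (ceilSqrt n)

/-- `K = ⌈p/(k−2)⌉` for the Oblivious k-Shot schedule (`k ≥ 3`). -/
def obK (n k : ℕ) : ℕ := (obP n + (k - 3)) / (k - 2)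

/-- The point of the plane `(ZMod p) × (ZMod p)` associated with label `i`. -/
def pointOf (p : ℕ) (i : ℕ) : ZMod p × ZMod p := ((i / p : ℕ), (i % p : ℕ))

/-- Membership in the line `L_{a,b}` of direction `a ∈ {0,…,p}` and offset `b ∈ ZMod p`:
`L_{p,b} = {(x,y) : x = b}` and `L_{a,b} = {(x,y) : y = a·x + b}` for `a < p`. -/
def lineMem (p a : ℕ) (b : ZMod p) (q : ZMod p × ZMod p) : Prop :=
  if a = p then q.1 = b else q.2 = (a : ZMod p) * q.1 + b

open Classical in
/-- The Oblivious k-Shot schedule on labels `{0,…,n−1}`.  Steps `t = 1, 2, …` come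
in consecutive blocks of `K+1` steps.  The first step of the `r`-th block
(`r = 0, 1, …`) is the `r`-th Line-Transmit step, with transmission set
`{i < n : point(i) ∈ L_{a,b}}` where `b = r mod p` and `a = ⌊r/p⌋ mod (p+1)`.
The remaining `K` steps of each block are Round-Robin steps; the `j`-th
Round-Robin step overall has transmission set `{j mod p²} ∩ {0,…,n−1}`. -/
noncomputable def obSched (n k : ℕ) : ℕ → Finset (Fin n) := fun t =>
  let p := obP n
  let K := obK n k
  if t = 0 then ∅
  else
    let t' := t - 1
    let r := t' / (K + 1)
    let pos := t' % (K + 1)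
    if pos = 0 then
      Finset.univ.filter
        (fun i : Fin n => lineMem p ((r / p) % (p + 1)) ((r % p : ℕ) : ZMod p) (pointOf p (i : ℕ)))
    else
      Finset.univ.filter (fun i : Fin n => (i : ℕ) = (r * K + (pos - 1)) % (p ^ 2))

open Classical in
/-- The set of active vertices at the end of step `t`: informed vertices having at
least one uninformed out-neighbor. -/
noncomputable def activeSet {n : ℕ} (𝒯 : ℕ → Finset (Fin n)) (k : ℕ)
    (adj : Fin n → Fin n → Prop) (s : Fin n) (t : ℕ) : Finset (Fin n) :=
  Finset.univ.filter (fun v : Fin n =>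
    (runState 𝒯 k adj s t v).isSome ∧ ∃ w : Fin n, adj v w ∧ runState 𝒯 k adj s t w = none)

open Classical in
/-- The progress at the end of step `t`: the number of informed vertices plus the
number of informed vertices all of whose out-neighbors are informed. -/
noncomputable def progressAt {n : ℕ} (𝒯 : ℕ → Finset (Fin n)) (k : ℕ)
    (adj : Fin n → Fin n → Prop) (s : Fin n) (t : ℕ) : ℕ :=
  (Finset.univ.filter (fun v : Fin n => (runState 𝒯 k adj s t v).isSome)).card +
  (Finset.univ.filter (fun v : Fin n => (runState 𝒯 k adj s t v).isSome ∧
      ∀ w : Fin n, adj v w → (runState 𝒯 k adj s t w).isSome)).card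

section Helpers

theorem rs_succ_of_some {n : ℕ} {𝒯 : ℕ → Finset (Fin n)} {k : ℕ}
    {adj : Fin n → Fin n → Prop} {s : Fin n} {t : ℕ} {v : Fin n} {T : ℕ}
    (h : runState 𝒯 k adj s t v = some T) : runState 𝒯 k adj s (t + 1) v = some T := by
  simp [runState, h]

theorem rs_mono {n : ℕ} {𝒯 : ℕ → Finset (Fin n)} {k : ℕ}
    {adj : Fin n → Fin n → Prop} {s : Fin n} {t t' : ℕ} {v : Fin n} {T : ℕ}
    (htt : t ≤ t') (h : runState 𝒯 k adj s t v = some T) :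
    runState 𝒯 k adj s t' v = some T := by
  induction htt with
  | refl => exact h
  | step _ ih => exact rs_succ_of_some ih

theorem rs_none {n : ℕ} {𝒯 : ℕ → Finset (Fin n)} {k : ℕ}
    {adj : Fin n → Fin n → Prop} {s : Fin n} {t t' : ℕ} {v : Fin n}
    (htt : t ≤ t') (h : runState 𝒯 k adj s t' v = none) :
    runState 𝒯 k adj s t v = none := by
  cases h' : runState 𝒯 k adj s t v with
  | none => rfl
  | some T => rw [rs_mono htt h'] at h; cases h

theorem rs_time {n : ℕ} {𝒯 : ℕ → Finset (Fin n)} {k : ℕ}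
    {adj : Fin n → Fin n → Prop} {s : Fin n} {t : ℕ} {v : Fin n} {T : ℕ}
    (h : runState 𝒯 k adj s t v = some T) : T ≤ t ∧ runState 𝒯 k adj s T v = some T := by
  induction t with
  | zero =>
    have h0 : T = 0 := by
      simp only [runState] at h
      split_ifs at h
      simpa using h.symm
    subst h0
    exact ⟨le_rfl, h⟩
  | succ t ih =>
    cases h' : runState 𝒯 k adj s t v with
    | some T' =>
      have := rs_succ_of_some h'
      rw [h] at this
      cases this
      exact ⟨(ih h').1.trans (Nat.le_succ _), (ih h').2⟩
    | none =>
      have h2 := h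
      simp only [runState, h'] at h2
      split_ifs at h2
      have : T = t + 1 := by simpa using h2.symm
      subst this
      exact ⟨le_rfl, h⟩

theorem rs_not_unique {n : ℕ} {𝒯 : ℕ → Finset (Fin n)} {k : ℕ}
    {adj : Fin n → Fin n → Prop} {s : Fin n} {t : ℕ} {w : Fin n}
    (h : runState 𝒯 k adj s (t + 1) w = none) :
    ¬ ∃! v : Fin n, adj v w ∧
      ∃ T, runState 𝒯 k adj s t v = some T ∧ transmitsAt 𝒯 k T (t + 1) v := by
  intro hu
  have h' := rs_none (Nat.le_succ t) h
  simp only [runState, h'] at h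
  rw [if_pos hu] at h
  cases h

theorem obP_prime (n : ℕ) : (obP n).Prime :=
  (Nat.find_spec (Nat.exists_infinite_primes (ceilSqrt n))).2

theorem le_obP_sq (n : ℕ) : n ≤ obP n ^ 2 := by
  have h1 : ceilSqrt n ≤ obP n := (Nat.find_spec (Nat.exists_infinite_primes (ceilSqrt n))).1
  have h2 : n ≤ ceilSqrt n ^ 2 := by
    unfold ceilSqrt
    split_ifs with h
    · rw [sq]; exact h.ge
    · rw [sq]; exact (Nat.lt_succ_sqrt n).le
  exact h2.trans (Nat.pow_le_pow_left h1 2)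

theorem le_mul_obK (n k : ℕ) (hk : 3 ≤ k) : obP n ≤ (k - 2) * obK n k := by
  unfold obK
  have h := Nat.div_add_mod (obP n + (k - 3)) (k - 2)
  have h2 := Nat.mod_lt (obP n + (k - 3)) (show 0 < k - 2 by omega)
  omega

theorem obK_pos (n k : ℕ) (hk : 3 ≤ k) : 0 < obK n k := by
  have h := le_mul_obK n k hk
  have h2 := (obP_prime n).pos
  exact Nat.pos_of_ne_zero (by intro h0; rw [h0] at h; omega)

/-- Line-Transmit membership. -/
theorem mem_line (n k r : ℕ) (v : Fin n) :
    v ∈ obSched n k (r * (obK n k + 1) + 1) ↔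
      lineMem (obP n) ((r / obP n) % (obP n + 1)) ((r % obP n : ℕ) : ZMod (obP n))
        (pointOf (obP n) (v : ℕ)) := by
  simp [obSched]

/-- Round-Robin membership. -/
theorem mem_rr (n k t : ℕ) (v : Fin n) (ht : (t - 1) % (obK n k + 1) ≠ 0) :
    v ∈ obSched n k t ↔ (v : ℕ) =
      (((t - 1) / (obK n k + 1)) * obK n k + ((t - 1) % (obK n k + 1) - 1)) % (obP n ^ 2) := by
  have h0 : t ≠ 0 := by rintro rfl; simp at ht
  simp [obSched, h0, ht]

theorem line_exists (p a : ℕ) [NeZero p] (q : ZMod p × ZMod p) :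
    ∃ b < p, lineMem p a ((b : ℕ) : ZMod p) q := by
  unfold lineMem
  split_ifs with h
  · exact ⟨q.1.val, ZMod.val_lt _, by simp⟩
  · exact ⟨(q.2 - a * q.1).val, ZMod.val_lt _, by simp⟩

theorem line_unique (p a : ℕ) (b b' : ZMod p) (q : ZMod p × ZMod p)
    (h : lineMem p a b q) (h' : lineMem p a b' q) : b = b' := by
  unfold lineMem at h h'
  split_ifs at h h' with ha
  · exact h.symm.trans h'
  · exact add_left_cancel (h.symm.trans h')

theorem cast_inj_lt {p a b : ℕ} (ha : a < p) (hb : b < p)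
    (h : (a : ZMod p) = (b : ZMod p)) : a = b := by
  have := (ZMod.natCast_eq_natCast_iff' a b p).1 h
  rwa [Nat.mod_eq_of_lt ha, Nat.mod_eq_of_lt hb] at this

theorem two_dirs (p : ℕ) [Fact p.Prime] {a a' : ℕ} (ha : a < p + 1) (ha' : a' < p + 1)
    (hne : a ≠ a') (b b' : ZMod p) (q q' : ZMod p × ZMod p)
    (h1 : lineMem p a b q) (h2 : lineMem p a b q')
    (h3 : lineMem p a' b' q) (h4 : lineMem p a' b' q') : q = q' := by
  unfold lineMem at h1 h2 h3 h4
  split_ifs at h1 h2 h3 h4 with hA hB hB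
  · omega
  · have hx : q.1 = q'.1 := h1.trans h2.symm
    exact Prod.ext hx (by rw [h3, h4, hx])
  · have hx : q.1 = q'.1 := h3.trans h4.symm
    exact Prod.ext hx (by rw [h1, h2, hx])
  · have hc : (a : ZMod p) - a' ≠ 0 := by
      intro h0
      exact hne (cast_inj_lt (by omega) (by omega) (sub_eq_zero.1 h0))
    have hx : q.1 = q'.1 := by
      have : ((a : ZMod p) - a') * (q.1 - q'.1) = 0 := by
        linear_combination h3 - h1 + h2 - h4
      rcases mul_eq_zero.1 this with h | h
      · exact absurd h hc
      · exact sub_eq_zero.1 h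
    exact Prod.ext hx (by rw [h1, h2, hx])

theorem pointOf_inj {p i j : ℕ} (hp : 0 < p) (hi : i < p ^ 2) (hj : j < p ^ 2)
    (h : pointOf p i = pointOf p j) : i = j := by
  have h1 := congrArg Prod.fst h
  have h2 := congrArg Prod.snd h
  simp only [pointOf] at h1 h2
  have e1 := cast_inj_lt (Nat.div_lt_of_lt_mul (by rwa [← sq]))
    (Nat.div_lt_of_lt_mul (by rwa [← sq])) h1
  have e2 := cast_inj_lt (Nat.mod_lt _ hp) (Nat.mod_lt _ hp) h2
  rw [← Nat.div_add_mod i p, ← Nat.div_add_mod j p, e1, e2]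

/-- A long window of full stages contains a Round-Robin step of each vertex. -/
theorem rr_in_window (n k : ℕ) (hk : 3 ≤ k) (v : Fin n) (r₁ r₂ : ℕ)
    (h : r₁ / obP n + (k - 1) ≤ r₂ / obP n) :
    ∃ t, r₁ * (obK n k + 1) + 1 < t ∧ t < r₂ * (obK n k + 1) + 1 ∧
      (t - 1) % (obK n k + 1) ≠ 0 ∧ v ∈ obSched n k t := by
  have hK := obK_pos n k hk
  have hpK := le_mul_obK n k hk
  have hp := (obP_prime n).pos
  have hv : (v : ℕ) < obP n ^ 2 := lt_of_lt_of_le v.2 (le_obP_sq n)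
  set p := obP n with hpdef
  set K := obK n k with hKdef
  set S := r₁ / p with hS
  -- choose the Round-Robin index
  obtain ⟨j, hj1, hj2, hj3⟩ : ∃ j, (S + 1) * p * K ≤ j ∧ j < (S + 1) * p * K + p ^ 2 ∧
      j % p ^ 2 = v := by
    have hP : 0 < p ^ 2 := by positivity
    generalize p ^ 2 = P at *
    generalize (S + 1) * p * K = J at *
    have hd := Nat.div_add_mod J P
    have hm := Nat.mod_lt J hP
    by_cases hc : J % P ≤ v
    · refine ⟨P * (J / P) + v, by omega, by omega, ?_⟩
      rw [Nat.mul_add_mod, Nat.mod_eq_of_lt hv]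
    · refine ⟨P * (J / P + 1) + v, by rw [mul_add]; omega, by rw [mul_add]; omega, ?_⟩
      rw [Nat.mul_add_mod, Nat.mod_eq_of_lt hv]
  have hr1 : (S + 1) * p ≤ j / K := (Nat.le_div_iff_mul_le hK).2 hj1
  have hr2 : j / K < (S + 1 + (k - 2)) * p := by
    rw [Nat.div_lt_iff_lt_mul hK]
    have : p ^ 2 ≤ p * ((k - 2) * K) := by rw [sq]; exact Nat.mul_le_mul_left _ hpK
    calc j < (S + 1) * p * K + p ^ 2 := hj2
      _ ≤ (S + 1) * p * K + p * ((k - 2) * K) := by omega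
      _ = _ := by ring
  have hr1' : r₁ < j / K := by
    have := Nat.lt_div_mul_add hp (a := r₁)
    rw [← hS] at this
    have e : (S + 1) * p = S * p + p := by ring
    omega
  have hr2' : j / K < r₂ := by
    have h3 : (S + 1 + (k - 2)) * p ≤ (r₂ / p) * p :=
      Nat.mul_le_mul_right _ (by omega)
    have := Nat.div_mul_le_self r₂ p
    omega
  have hjm := Nat.mod_lt j hK
  have hm : (j / K * (K + 1) + (j % K + 1)) % (K + 1) = j % K + 1 := by
    rw [Nat.mul_add_mod', Nat.mod_eq_of_lt (by omega)]
  have hq : (j / K * (K + 1) + (j % K + 1)) / (K + 1) = j / K := by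
    rw [mul_comm, Nat.mul_add_div (by omega), Nat.div_eq_of_lt (a := j % K + 1) (by omega)]; rfl
  refine ⟨j / K * (K + 1) + (j % K + 1) + 1, ?_, ?_, ?_, ?_⟩
  · have : r₁ * (K + 1) ≤ j / K * (K + 1) := Nat.mul_le_mul_right _ hr1'.le
    omega
  · have : (j / K + 1) * (K + 1) ≤ r₂ * (K + 1) := Nat.mul_le_mul_right _ hr2'
    have e : (j / K + 1) * (K + 1) = j / K * (K + 1) + (K + 1) := by ring
    omega
  · rw [Nat.add_sub_cancel, hm]; omega
  · rw [mem_rr n k _ v (by rw [Nat.add_sub_cancel, hm]; omega), Nat.add_sub_cancel]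
    simp only [← hKdef, ← hpdef]
    rw [hm, hq, Nat.add_sub_cancel, mul_comm (j / K), Nat.div_add_mod, hj3]

/-- Active vertices transmit whenever they are scheduled. -/
theorem active_transmits (n k : ℕ) (hk : 3 ≤ k) (adj : Fin n → Fin n → Prop) (s : Fin n)
    (v w : Fin n) (hvw : adj v w) (T : ℕ) (t : ℕ) :
    runState (obSched n k) k adj s t v = some T →
    runState (obSched n k) k adj s t w = none →
    v ∈ obSched n k (t + 1) → transmitsAt (obSched n k) k T (t + 1) v := by
  induction t using Nat.strong_induction_on with
  | _ t ih =>
  intro hv hw hmem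
  obtain ⟨hTt, hTT⟩ := rs_time hv
  -- no Round-Robin appearance so far
  have hnoRR : ∀ t', T < t' → t' ≤ t → v ∈ obSched n k t' →
      (t' - 1) % (obK n k + 1) = 0 := by
    intro t' h1 h2 h3
    by_contra hrr
    obtain ⟨u, rfl⟩ : ∃ u, t' = u + 1 := ⟨t' - 1, by omega⟩
    have hvu : runState (obSched n k) k adj s u v = some T := rs_mono (by omega) hTT
    have htr := ih u (by omega) hvu (rs_none (by omega) hw) h3
    refine rs_not_unique (rs_none h2 hw) ⟨v, ⟨hvw, T, hvu, htr⟩, ?_⟩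
    rintro y ⟨_, T', _, hy⟩
    have e1 := (mem_rr n k _ y hrr).1 hy.2.1
    have e2 := (mem_rr n k _ v hrr).1 h3
    exact Fin.ext (e1.trans e2.symm)
  refine ⟨by omega, hmem, ?_⟩
  by_contra hcard
  push Not at hcard
  set A := (Finset.Ioo T (t + 1)).filter (fun t' => v ∈ obSched n k t') with hA
  have hAline : ∀ x ∈ A, T < x ∧ x ≤ t ∧ x = (x - 1) / (obK n k + 1) * (obK n k + 1) + 1 ∧
      v ∈ obSched n k x := by
    intro x hx
    rw [hA, Finset.mem_filter, Finset.mem_Ioo] at hx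
    have h0 := hnoRR x hx.1.1 (by omega) hx.2
    have := Nat.div_add_mod' (x - 1) (obK n k + 1)
    exact ⟨hx.1.1, by omega, by omega, hx.2⟩
  let g : ℕ → ℕ := fun x => (x - 1) / (obK n k + 1) / obP n
  have hp := (obP_prime n).pos
  have hinj : Set.InjOn g A := by
    intro x hx y hy hxy
    obtain ⟨_, _, ex, mx⟩ := hAline x hx
    obtain ⟨_, _, ey, my⟩ := hAline y hy
    simp only [g] at hxy
    generalize (x - 1) / (obK n k + 1) = r at *
    generalize (y - 1) / (obK n k + 1) = r' at *
    rw [ex, mem_line] at mx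
    rw [ey, mem_line, ← hxy] at my
    have hb := cast_inj_lt (Nat.mod_lt _ hp) (Nat.mod_lt _ hp) (line_unique _ _ _ _ _ mx my)
    have : r = r' := by
      rw [← Nat.div_add_mod r (obP n), ← Nat.div_add_mod r' (obP n), hxy, hb]
    rw [ex, ey, this]
  have hne : (A.image g).Nonempty := by
    rw [← Finset.card_pos, Finset.card_image_of_injOn hinj]; omega
  have hsub : A.image g ⊆ Finset.Icc ((A.image g).min' hne) ((A.image g).max' hne) := by
    intro x hx
    exact Finset.mem_Icc.2 ⟨Finset.min'_le _ _ hx, Finset.le_max' _ _ hx⟩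
  have hle := Finset.card_le_card hsub
  rw [Finset.card_image_of_injOn hinj, Nat.card_Icc] at hle
  obtain ⟨x, hx, gx⟩ := Finset.mem_image.1 (Finset.min'_mem _ hne)
  obtain ⟨y, hy, gy⟩ := Finset.mem_image.1 (Finset.max'_mem _ hne)
  rw [← gx, ← gy] at hle
  obtain ⟨hx1, _, ex, _⟩ := hAline x hx
  obtain ⟨_, hy2, ey, _⟩ := hAline y hy
  obtain ⟨z, hz1, hz2, hz3, hz4⟩ := rr_in_window n k hk v ((x - 1) / (obK n k + 1))
    ((y - 1) / (obK n k + 1)) (by simp only [g] at hle; omega)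
  rw [← ex] at hz1
  rw [← ey] at hz2
  exact hz3 (hnoRR z (by omega) (by omega) hz4)

end Helpers

/-- Run the Oblivious k-Shot schedule (`3 ≤ k ≤ √n`) under the
`k`-shot semantics on any `n`-vertex radio network.  A stage consists of `p`
consecutive blocks of `K+1` steps, so it has `p·(K+1)` steps.  Let `F` be the set of
active vertices at the beginning of a stage.  If `|F| ≤ k/2`, then during the next
`2·|F|` stages the progress increases by at least `|F|`. -/
theorem oblivious_kshot_progress (n k : ℕ) (hn : 2 ≤ n) (hk : 3 ≤ k) (hkn : k ^ 2 ≤ n)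
    (adj : Fin n → Fin n → Prop) (s : Fin n) (hnet : IsNetwork adj s) (σ : ℕ) :
    let stageLen := obP n * (obK n k + 1)
    let t₀ := σ * stageLen
    let F := activeSet (obSched n k) k adj s t₀
    2 * F.card ≤ k →
      progressAt (obSched n k) k adj s t₀ + F.card ≤
        progressAt (obSched n k) k adj s (t₀ + 2 * F.card * stageLen) := by
  intro stageLen t₀ F hF
  classical
  have hprime := obP_prime n
  have : Fact (obP n).Prime := ⟨hprime⟩
  have hp := hprime.pos
  have hkp : k ≤ obP n := by
    have : k ^ 2 ≤ obP n ^ 2 := hkn.trans (le_obP_sq n)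
    exact (Nat.pow_le_pow_iff_left (by norm_num)).1 this
  have hle : t₀ ≤ t₀ + 2 * F.card * stageLen := Nat.le_add_right _ _
  set t₁ := t₀ + 2 * F.card * stageLen with ht₁
  set R := runState (obSched n k) k adj s with hR
  have hmono : ∀ x, (R t₀ x).isSome → (R t₁ x).isSome := by
    intro x hx
    obtain ⟨T, hT⟩ := Option.isSome_iff_exists.1 hx
    exact Option.isSome_iff_exists.2 ⟨T, rs_mono hle hT⟩
  unfold progressAt
  rw [← hR]
  set I₀ := Finset.univ.filter (fun v : Fin n => (R t₀ v).isSome) with hI₀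
  set I₁ := Finset.univ.filter (fun v : Fin n => (R t₁ v).isSome) with hI₁
  set D₀ := Finset.univ.filter (fun v : Fin n => (R t₀ v).isSome ∧
      ∀ w : Fin n, adj v w → (R t₀ w).isSome) with hD₀
  set D₁ := Finset.univ.filter (fun v : Fin n => (R t₁ v).isSome ∧
      ∀ w : Fin n, adj v w → (R t₁ w).isSome) with hD₁
  have hFmem : ∀ x, x ∈ F ↔ (R t₀ x).isSome ∧ ∃ w, adj x w ∧ R t₀ w = none := by
    intro x; simp [F, activeSet, hR]
  have hII : I₀ ⊆ I₁ := by
    intro x hx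
    rw [hI₀, Finset.mem_filter] at hx
    rw [hI₁, Finset.mem_filter]
    exact ⟨hx.1, hmono x hx.2⟩
  have hDD : D₀ ⊆ D₁ := by
    intro x hx
    rw [hD₀, Finset.mem_filter] at hx
    rw [hD₁, Finset.mem_filter]
    exact ⟨hx.1, hmono x hx.2.1, fun w hw => hmono w (hx.2.2 w hw)⟩
  by_cases hall : F ⊆ D₁
  · -- every vertex of `F` has become inactive
    have hdisj : Disjoint D₀ F := by
      rw [Finset.disjoint_left]
      intro x hx hxF
      rw [hD₀, Finset.mem_filter] at hx
      obtain ⟨_, w, hw, hn'⟩ := (hFmem x).1 hxF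
      have := hx.2.2 w hw
      rw [hn'] at this
      cases this
    have h1 := Finset.card_le_card (Finset.union_subset hDD hall)
    rw [Finset.card_union_of_disjoint hdisj] at h1
    have h2 := Finset.card_le_card hII
    omega
  · -- some vertex of `F` stays active
    obtain ⟨v, hvF, hvD⟩ := Finset.not_subset.1 hall
    obtain ⟨hv0, -⟩ := (hFmem v).1 hvF
    obtain ⟨w, hvw, hw1⟩ : ∃ w, adj v w ∧ R t₁ w = none := by
      by_contra hcon
      push Not at hcon
      apply hvD
      rw [hD₁, Finset.mem_filter]
      exact ⟨Finset.mem_univ _, hmono v hv0, fun w hw => Option.isSome_iff_ne_none.2 (hcon w hw)⟩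
    have hw0 : R t₀ w = none := rs_none hle hw1
    obtain ⟨T, hT⟩ := Option.isSome_iff_exists.1 hv0
    have hcol : ∀ i : ℕ, ∃ u : Fin n, i < 2 * F.card → u ≠ v ∧ adj u w ∧ (R t₁ u).isSome ∧
        ∃ b : ZMod (obP n),
          lineMem (obP n) ((σ + i) % (obP n + 1)) b (pointOf (obP n) (v : ℕ)) ∧
          lineMem (obP n) ((σ + i) % (obP n + 1)) b (pointOf (obP n) (u : ℕ)) := by
      intro i
      by_cases hi : i < 2 * F.card
      swap
      · exact ⟨v, fun h => absurd h hi⟩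
      obtain ⟨b, hb, hbl⟩ := line_exists (obP n) ((σ + i) % (obP n + 1)) (pointOf (obP n) (v : ℕ))
      set r := (σ + i) * obP n + b with hr
      have hrd : r / obP n = σ + i := by
        rw [hr, mul_comm, Nat.mul_add_div hp, Nat.div_eq_of_lt hb]; rfl
      have hrm : r % obP n = b := by
        rw [hr, Nat.mul_add_mod', Nat.mod_eq_of_lt hb]
      have hmem : ∀ x : Fin n, x ∈ obSched n k (r * (obK n k + 1) + 1) ↔
          lineMem (obP n) ((σ + i) % (obP n + 1)) (b : ZMod (obP n))
            (pointOf (obP n) (x : ℕ)) := by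
        intro x
        rw [mem_line, hrd, hrm]
      have hlo : t₀ ≤ r * (obK n k + 1) := by
        have : σ * obP n ≤ r := by rw [hr, add_mul]; omega
        calc t₀ = σ * obP n * (obK n k + 1) := by simp only [t₀, stageLen]; ring
          _ ≤ _ := Nat.mul_le_mul_right _ this
      have hhi : r * (obK n k + 1) + 1 ≤ t₁ := by
        have h1 : r + 1 ≤ (σ + 2 * F.card) * obP n := by
          have : (σ + i + 1) * obP n ≤ (σ + 2 * F.card) * obP n :=
            Nat.mul_le_mul_right _ (by omega)
          have e : (σ + i + 1) * obP n = (σ + i) * obP n + obP n := by ring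
          omega
        have h2 := Nat.mul_le_mul_right (obK n k + 1) h1
        have e1 : (σ + 2 * F.card) * obP n * (obK n k + 1) = t₁ := by
          simp only [ht₁, t₀, stageLen]; ring
        have e2 : (r + 1) * (obK n k + 1) = r * (obK n k + 1) + (obK n k + 1) := by ring
        omega
      have hvr : R (r * (obK n k + 1)) v = some T := rs_mono hlo hT
      have htr := active_transmits n k hk adj s v w hvw T (r * (obK n k + 1)) hvr
        (rs_none (by omega) hw1) ((hmem v).2 hbl)
      have hnu := rs_not_unique (rs_none hhi hw1)
      by_contra hcon
      push Not at hcon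
      refine hnu ⟨v, ⟨hvw, T, hvr, htr⟩, ?_⟩
      rintro u ⟨huw, T', hu, hut⟩
      by_contra huv
      have hsome : (R t₁ u).isSome :=
        Option.isSome_iff_exists.2 ⟨T', rs_mono (by omega) hu⟩
      exact (hcon u).2 huv huw hsome b hbl ((hmem u).1 hut.2.1)
    choose u hu using hcol
    have hinj : Set.InjOn u (Finset.range (2 * F.card)) := by
      intro i hi j hj hij
      by_contra hne
      rw [Finset.coe_range, Set.mem_Iio] at hi hj
      obtain ⟨huv, -, -, b, h1, h2⟩ := hu i hi
      obtain ⟨-, -, -, b', h3, h4⟩ := hu j hj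
      rw [← hij] at h4
      have hdir : (σ + i) % (obP n + 1) ≠ (σ + j) % (obP n + 1) := by
        intro h
        have h' : i ≡ j [MOD (obP n + 1)] := Nat.ModEq.add_left_cancel' σ h
        exact hne (h'.eq_of_lt_of_lt (by omega) (by omega))
      have := two_dirs (obP n) (Nat.mod_lt _ (by omega)) (Nat.mod_lt _ (by omega)) hdir
        b b' _ _ h1 h2 h3 h4
      exact huv (Fin.ext (pointOf_inj hp (lt_of_lt_of_le v.2 (le_obP_sq n))
        (lt_of_lt_of_le (u i).2 (le_obP_sq n)) this)).symm
    set U := (Finset.range (2 * F.card)).image u with hU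
    have hUc : U.card = 2 * F.card := by
      rw [hU, Finset.card_image_of_injOn hinj, Finset.card_range]
    have hUI : U ⊆ F ∪ (I₁ \ I₀) := by
      intro x hx
      obtain ⟨i, hi, rfl⟩ := Finset.mem_image.1 hx
      obtain ⟨-, h2, h3, -⟩ := hu i (Finset.mem_range.1 hi)
      rw [Finset.mem_union, Finset.mem_sdiff, hFmem, hI₀, hI₁, Finset.mem_filter,
        Finset.mem_filter]
      by_cases hx0 : (R t₀ (u i)).isSome
      · exact Or.inl ⟨hx0, w, h2, hw0⟩
      · exact Or.inr ⟨⟨Finset.mem_univ _, h3⟩, fun h => hx0 h.2⟩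
    have h1 := (Finset.card_le_card hUI).trans (Finset.card_union_le _ _)
    have h2 := Finset.card_sdiff_add_card_eq_card hII
    have h3 := Finset.card_le_card hDD
    omega
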